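/- Let Ω ⊂ ℝⁿ be a bounded open set with diameter < 1 and k ∈ ℕ. For every w ∈ L²_loc(Ω) with ‖w‖_k² := ∫_Ω |w|² d(z,∂Ω)^{2k} dλ < +∞, there exists v ∈ L²_loc(Ω) solving Δv = ∂w/∂x₁ in Ω (in the sense of distributions, after extending w to a compactly supported distribution w̃ of order ≤ k on ℝⁿ and setting v = (∂E/∂x₁) ⋆ w̃ restricted to Ω, where E is the fundamental solution of Δ) such that ‖v‖²_{k+n−1} := ∫_Ω |v|² d(z,∂Ω)^{2(k+n−1)} dλ ≤ C(Ω,k,n) ‖w‖_k². -/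

import Mathlib

open MeasureTheory Metric
noncomputable section

abbrev En (n : ℕ) := EuclideanSpace ℝ (Fin n)

def IsTest {n : ℕ} (φ : En n → ℝ) : Prop :=
  ContDiff ℝ (⊤ : ℕ∞) φ ∧ HasCompactSupport φ

noncomputable def lapR {n : ℕ} (f : En n → ℝ) (x : En n) : ℝ :=
  ∑ i : Fin n,
    iteratedFDeriv ℝ 2 f x ![EuclideanSpace.single i 1, EuclideanSpace.single i 1]

/-!
By duality (Riesz representation on weighted `L²` spaces), solving `Δv = ∂w` with a weighted bound
amounts to an a priori estimate `∫ δ⁻ᵏ |∂φ|² ≤ C ∫ δ⁻ᵐ |Δφ|²` for test functions `φ` on `Ω`, where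
`δ` is the distance to the complement of `Ω` and `m ≥ dim + k`.

For a pole `p ∉ Ω` the weight `‖x - p‖⁻ᴹ` is smooth on the support of `φ`, and pairing `Δφ` with the
multiplier `(x - p) · ∇φ - β φ` (Rellich) for the right `β` gives the Carleman estimate
`∫ ‖x - p‖⁻ᴹ |∇φ|² ≤ C ∫ ‖x - p‖⁻ᴹ |Δφ|²`, with `C` independent of `p`. Taking for `p` a boundary
point nearest to `x`, the weight is comparable to `δ(x)⁻ᴹ` on the ball `B(x, δ(x)/2)` and at most
`δ⁻ᴹ` everywhere, so `∫_{B(x, δ(x)/2)} |∇φ|² ≤ C δ(x)ᴹ ∫ δ⁻ᴹ |Δφ|²`. Integrating this over `x ∈ Ω`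
against `δ(x)^(-dim - k)` recovers `∫ δ⁻ᵏ |∇φ|²` on the left, since `B(x, δ(x)/2)` has volume
comparable to `δ(x)^dim`.
-/

section

open Module Set InnerProductSpace
open scoped ENNReal Gradient Laplacian

variable {E : Type*} [NormedAddCommGroup E] [InnerProductSpace ℝ E]

section Calculus

lemma tsupport_sq_subset {X : Type*} [TopologicalSpace X] (f : X → ℝ) :
    tsupport (fun x => f x ^ 2) ⊆ tsupport f := by
  simpa only [sq] using tsupport_mul_subset_left

/-- The divergence of a vector field, as the trace of its derivative. -/
def divergence (F : E → E) (x : E) : ℝ := LinearMap.trace ℝ E (fderiv ℝ F x)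

/-- The unnormalised radial derivative `(x - p) · ∇φ(x)` about the pole `p`. -/
def radialDeriv (p : E) (φ : E → ℝ) (x : E) : ℝ := fderiv ℝ φ x (x - p)

/-- The Euler operator `(x - p) · ∇φ - β φ`, which annihilates the functions that are
homogeneous of degree `β` about `p`; it is the multiplier of the Rellich identity. -/
def eulerOperator (p : E) (β : ℝ) (φ : E → ℝ) (x : E) : ℝ := radialDeriv p φ x - β * φ x

variable {p x : E} {φ : E → ℝ}

lemma hasFDerivAt_inv_norm_sub_pow (hx : x ≠ p) (c : ℕ) :
    HasFDerivAt (fun y => ‖y - p‖⁻¹ ^ c) (-(c * ‖x - p‖⁻¹ ^ (c + 2)) • innerSL ℝ (x - p)) x := by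
  have hr : ‖x - p‖ ≠ 0 := norm_ne_zero_iff.2 (sub_ne_zero.2 hx)
  have hnorm : HasFDerivAt (fun y => ‖y - p‖) (‖x - p‖⁻¹ • innerSL ℝ (x - p)) x := by
    convert (((hasFDerivAt_id x).sub_const p).norm_sq.sqrt (by simpa using hr)) using 1
    · ext y; simp
    · ext v
      simp only [map_sub, smul_apply, sub_apply, coe_innerSL_apply, smul_eq_mul, id_eq,
        norm_nonneg, Real.sqrt_sq, ContinuousLinearMap.comp_id, nsmul_eq_mul, Nat.cast_ofNat]
      ring
  refine (((hasDerivAt_inv hr).comp_hasFDerivAt x hnorm).pow c).congr_fderiv ?_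
  ext v
  rcases c with _ | c
  · simp
  · simp only [Function.comp_apply, add_tsub_cancel_right, inv_pow, nsmul_eq_mul,
      smul_apply, coe_innerSL_apply, smul_eq_mul]
    field

lemma contDiffAt_inv_norm_sub_pow (hx : x ≠ p) (c : ℕ) {n : WithTop ℕ∞} :
    ContDiffAt ℝ n (fun y => ‖y - p‖⁻¹ ^ c) x :=
  (((contDiffAt_id.sub contDiffAt_const).norm ℝ (sub_ne_zero.2 hx)).inv
    (norm_ne_zero_iff.2 (sub_ne_zero.2 hx))).pow c

lemma differentiable_fderiv_of_contDiff_two (hφ : ContDiff ℝ 2 φ) :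
    Differentiable ℝ (fderiv ℝ φ) :=
  (hφ.fderiv_right (m := 1) le_rfl).differentiable one_ne_zero

lemma contDiff_radialDeriv {n m : WithTop ℕ∞} (hφ : ContDiff ℝ n φ) (h : m + 1 ≤ n) (p : E) :
    ContDiff ℝ m (radialDeriv p φ) :=
  (hφ.fderiv_right h).clm_apply (contDiff_id.sub contDiff_const)

lemma tsupport_radialDeriv_subset (p : E) (φ : E → ℝ) :
    tsupport (radialDeriv p φ) ⊆ tsupport φ :=
  closure_minimal (fun x hx => tsupport_fderiv_subset ℝ (subset_tsupport _ fun h => hx (by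
    simp [radialDeriv, h]))) (isClosed_tsupport _)

lemma fderiv_radialDeriv (hφ : ContDiff ℝ 2 φ) (p x v : E) :
    fderiv ℝ (radialDeriv p φ) x v = fderiv ℝ (fderiv ℝ φ) x v (x - p) + fderiv ℝ φ x v := by
  have h := (differentiable_fderiv_of_contDiff_two hφ x).hasFDerivAt.clm_apply
    ((hasFDerivAt_id x).sub_const p)
  rw [show radialDeriv p φ = fun y => fderiv ℝ φ y (id y - p) from rfl, h.fderiv]
  simp [add_comm]

lemma contDiff_eulerOperator (hφ : ContDiff ℝ 2 φ) (p : E) (β : ℝ) :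
    ContDiff ℝ 1 (eulerOperator p β φ) :=
  (contDiff_radialDeriv hφ le_rfl p).sub (contDiff_const.mul (hφ.of_le one_le_two))

lemma tsupport_eulerOperator_subset (p : E) (β : ℝ) (φ : E → ℝ) :
    tsupport (eulerOperator p β φ) ⊆ tsupport φ :=
  (tsupport_sub _ _).trans
    (union_subset (tsupport_radialDeriv_subset p φ) (tsupport_mul_subset_right))

variable [FiniteDimensional ℝ E]

lemma divergence_smul {f : E → ℝ} {F : E → E} (hf : DifferentiableAt ℝ f x)
    (hF : DifferentiableAt ℝ F x) :
    divergence (fun y => f y • F y) x = f x * divergence F x + fderiv ℝ f x (F x) := by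
  have h : (fderiv ℝ (fun y => f y • F y) x : E →ₗ[ℝ] E) =
      f x • (fderiv ℝ F x : E →ₗ[ℝ] E) + (fderiv ℝ f x : E →ₗ[ℝ] ℝ).smulRight (F x) := by
    ext v; simp [fderiv_fun_smul hf hF]
  rw [divergence, h, map_add, map_smul, LinearMap.trace_smulRight]
  rfl

lemma divergence_sub_const (p x : E) : divergence (fun y => y - p) x = finrank ℝ E := by
  rw [divergence, fderiv_sub_const, fderiv_fun_id]
  exact LinearMap.trace_id ℝ E

lemma fderiv_gradient_apply (hφ : DifferentiableAt ℝ (fderiv ℝ φ) x) (v w : E) :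
    inner ℝ (fderiv ℝ (∇ φ) x v) w = fderiv ℝ (fderiv ℝ φ) x v w := by
  have h : HasFDerivAt (∇ φ) _ x :=
    (toDual ℝ E).symm.toContinuousLinearEquiv.hasFDerivAt.comp x hφ.hasFDerivAt
  rw [h.fderiv]
  exact toDual_symm_apply

lemma contDiff_gradient {n m : WithTop ℕ∞} (hφ : ContDiff ℝ n φ) (h : m + 1 ≤ n) :
    ContDiff ℝ m (∇ φ) :=
  (toDual ℝ E).symm.toContinuousLinearEquiv.contDiff.comp (hφ.fderiv_right h)

lemma differentiable_gradient_of_contDiff_two (hφ : ContDiff ℝ 2 φ) :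
    Differentiable ℝ (∇ φ) :=
  (contDiff_gradient hφ le_rfl).differentiable one_ne_zero

lemma tsupport_gradient_subset (φ : E → ℝ) : tsupport (∇ φ) ⊆ tsupport φ :=
  closure_minimal (fun x hx => tsupport_fderiv_subset ℝ (subset_tsupport _ fun h => hx (by
    simp [gradient, h]))) (isClosed_tsupport _)

lemma tsupport_sq_norm_gradient_subset (φ : E → ℝ) :
    tsupport (fun x => ‖∇ φ x‖ ^ 2) ⊆ tsupport φ :=
  (tsupport_sq_subset _).trans
    ((tsupport_comp_subset norm_zero _).trans (tsupport_gradient_subset φ))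

lemma divergence_gradient (hφ : DifferentiableAt ℝ (fderiv ℝ φ) x) :
    divergence (∇ φ) x = Δ φ x := by
  rw [divergence, LinearMap.trace_eq_sum_inner _ (stdOrthonormalBasis ℝ E),
    laplacian_eq_iteratedFDeriv_stdOrthonormalBasis]
  refine Finset.sum_congr rfl fun i _ => ?_
  rw [real_inner_comm, ContinuousLinearMap.coe_coe, fderiv_gradient_apply hφ,
    iteratedFDeriv_two_apply]
  rfl

lemma continuous_laplacian (hφ : ContDiff ℝ 2 φ) : Continuous (Δ φ) := by
  rw [laplacian_eq_iteratedFDeriv_stdOrthonormalBasis]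
  exact continuous_finsetSum _ fun i _ =>
    (ContinuousMultilinearMap.apply ℝ (fun _ : Fin 2 => E) ℝ _).continuous.comp
      (hφ.continuous_iteratedFDeriv le_rfl)

lemma tsupport_laplacian_subset (φ : E → ℝ) : tsupport (Δ φ) ⊆ tsupport φ :=
  closure_minimal (fun x hx => tsupport_iteratedFDeriv_subset (𝕜 := ℝ) 2 (subset_tsupport _
    fun h => hx (by simp [laplacian_eq_iteratedFDeriv_stdOrthonormalBasis, h])))
    (isClosed_tsupport _)

lemma divergence_inv_norm_sub_pow_smul_sub (hx : x ≠ p) (c : ℕ) :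
    divergence (fun y => ‖y - p‖⁻¹ ^ c • (y - p)) x = (finrank ℝ E - c) * ‖x - p‖⁻¹ ^ c := by
  have hr : ‖x - p‖ ≠ 0 := norm_ne_zero_iff.2 (sub_ne_zero.2 hx)
  have hσ := hasFDerivAt_inv_norm_sub_pow hx c
  rw [divergence_smul (F := fun y => y - p) hσ.differentiableAt
    (differentiableAt_id.sub_const p), hσ.fderiv, divergence_sub_const, smul_apply,
    innerSL_apply_apply, real_inner_self_eq_norm_sq]
  simp only [smul_eq_mul, inv_pow]
  field

lemma divergence_inv_norm_sub_pow_smul_gradient (hφ : ContDiff ℝ 2 φ) (hx : x ≠ p) (c : ℕ) :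
    divergence (fun y => ‖y - p‖⁻¹ ^ c • ∇ φ y) x =
      ‖x - p‖⁻¹ ^ c * Δ φ x - c * ‖x - p‖⁻¹ ^ (c + 2) * radialDeriv p φ x := by
  have hσ := hasFDerivAt_inv_norm_sub_pow hx c
  rw [divergence_smul hσ.differentiableAt (differentiable_gradient_of_contDiff_two hφ x),
    divergence_gradient (differentiable_fderiv_of_contDiff_two hφ x), hσ.fderiv, smul_apply,
    innerSL_apply_apply, real_inner_comm, inner_gradient_left, ← radialDeriv, smul_eq_mul]
  ring

lemma fderiv_sq_norm_gradient (hφ : ContDiff ℝ 2 φ) (x v : E) :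
    fderiv ℝ (fun y => ‖∇ φ y‖ ^ 2) x v = 2 * fderiv ℝ (fderiv ℝ φ) x v (∇ φ x) := by
  have hgrad := (differentiable_gradient_of_contDiff_two hφ x).hasFDerivAt.norm_sq
  rw [show (fun y => ‖∇ φ y‖ ^ 2) = (‖∇ φ ·‖ ^ 2) from rfl, hgrad.fderiv]
  simp [← fderiv_gradient_apply (differentiable_fderiv_of_contDiff_two hφ x)]

lemma inner_gradient_eulerOperator (hφ : ContDiff ℝ 2 φ) (p : E) (β : ℝ) (x : E) :
    inner ℝ (∇ (eulerOperator p β φ) x) (∇ φ x) =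
      (1 - β) * ‖∇ φ x‖ ^ 2 + 1 / 2 * radialDeriv p (fun y => ‖∇ φ y‖ ^ 2) x := by
  have hN : DifferentiableAt ℝ (radialDeriv p φ) x :=
    (contDiff_radialDeriv hφ le_rfl p).differentiable one_ne_zero x
  have hφd : DifferentiableAt ℝ φ x := hφ.differentiable two_ne_zero x
  have hsymm : fderiv ℝ (fderiv ℝ φ) x (∇ φ x) (x - p) = fderiv ℝ (fderiv ℝ φ) x (x - p) (∇ φ x) :=
    (hφ.contDiffAt.isSymmSndFDerivAt (by simp)).eq _ _
  have hG : fderiv ℝ (eulerOperator p β φ) x = fderiv ℝ (radialDeriv p φ) x - β • fderiv ℝ φ x := by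
    rw [show eulerOperator p β φ = fun y => radialDeriv p φ y - β * φ y from rfl,
      fderiv_fun_sub hN (hφd.const_mul β), fderiv_const_mul hφd]
  rw [inner_gradient_left, hG, radialDeriv, fderiv_sq_norm_gradient hφ, sub_apply,
    fderiv_radialDeriv hφ, hsymm, smul_apply, ← inner_gradient_left, real_inner_self_eq_norm_sq,
    smul_eq_mul]
  ring

end Calculus

section Integration

lemma integrable_mul_of_continuousOn {X : Type*} [TopologicalSpace X] [T2Space X]
    [MeasurableSpace X] [OpensMeasurableSpace X] {μ : Measure X} [IsFiniteMeasureOnCompacts μ]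
    {w f : X → ℝ} {K : Set X} (hK : IsCompact K) (hw : ContinuousOn w K) (hf : Continuous f)
    (hfK : tsupport f ⊆ K) : Integrable (fun x => w x * f x) μ :=
  (integrableOn_iff_integrable_of_support_subset
    ((Function.support_mul_subset_right _ _).trans ((subset_tsupport f).trans hfK))).1
    ((hw.mul hf.continuousOn).integrableOn_compact hK)

variable [FiniteDimensional ℝ E] [MeasurableSpace E] [BorelSpace E] {μ : Measure E}
  [μ.IsAddHaarMeasure]

lemma integral_fderiv_apply_eq_neg_integral_mul_divergence {g : E → ℝ} {F : E → E}
    (hg : ContDiff ℝ 1 g) (hgc : HasCompactSupport g)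
    (hF : ∀ x ∈ tsupport g, ContDiffAt ℝ 1 F x) :
    ∫ x, fderiv ℝ g x (F x) ∂μ = -∫ x, g x * divergence F x ∂μ := by
  let b := stdOrthonormalBasis ℝ E
  have hFi (i) : ∀ x ∈ tsupport g, ContDiffAt ℝ 1 (fun y => inner ℝ (b i) (F y)) x :=
    fun x hx => contDiffAt_const.inner ℝ (hF x hx)
  have hInt {u : E → ℝ} {v : E → ℝ} (hu : ∀ x ∈ tsupport g, ContinuousAt u x)
      (hv : Continuous v) (hvg : tsupport v ⊆ tsupport g) :
      Integrable (fun x => u x * v x) μ :=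
    integrable_mul_of_continuousOn hgc (fun x hx => (hu x hx).continuousWithinAt) hv hvg
  have hgF (i) : Integrable (fun x => inner ℝ (b i) (F x) * fderiv ℝ g x (b i)) μ :=
    hInt (fun x hx => (hFi i x hx).continuousAt)
      ((hg.continuous_fderiv one_ne_zero).clm_apply continuous_const)
      (tsupport_fderiv_apply_subset ℝ _)
  have hFg (i) : Integrable (fun x => fderiv ℝ (fun y => inner ℝ (b i) (F y)) x (b i) * g x) μ :=
    hInt (fun x hx => ((hFi i x hx).fderiv_right (m := 0) le_rfl).continuousAt.clm_apply
      continuousAt_const) hg.continuous subset_rfl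
  have hdiv (x) : g x * divergence F x =
      ∑ i, fderiv ℝ (fun y => inner ℝ (b i) (F y)) x (b i) * g x := by
    by_cases hx : x ∈ tsupport g
    · rw [divergence, LinearMap.trace_eq_sum_inner _ b, Finset.mul_sum]
      refine Finset.sum_congr rfl fun i _ => ?_
      rw [fderiv_inner_apply ℝ (differentiableAt_const _)
        ((hF x hx).differentiableAt one_ne_zero)]
      simp [mul_comm]
    · simp [image_eq_zero_of_notMem_tsupport hx]
  have hdir (x) : fderiv ℝ g x (F x) = ∑ i, inner ℝ (b i) (F x) * fderiv ℝ g x (b i) := by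
    conv_lhs => rw [← b.sum_repr' (F x), map_sum]
    simp
  simp_rw [hdir, hdiv]
  rw [integral_finsetSum _ fun i _ => hgF i, integral_finsetSum _ fun i _ => hFg i,
    ← Finset.sum_neg_distrib]
  exact Finset.sum_congr rfl fun i _ =>
    integral_mul_fderiv_eq_neg_fderiv_mul_of_integrable (hFg i) (hgF i)
      (hInt (fun x hx => (hFi i x hx).continuousAt) hg.continuous subset_rfl)
      (fun x hx => (hFi i x hx).differentiableAt one_ne_zero)
      (fun x _ => (hg.differentiable one_ne_zero).differentiableAt)

end Integration

section Pole

variable [MeasurableSpace E] [BorelSpace E] {μ : Measure E} {p : E} {φ g : E → ℝ}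

lemma integrable_inv_norm_sub_pow_mul [IsFiniteMeasureOnCompacts μ] {K : Set E} {f : E → ℝ}
    (hK : IsCompact K) (hp : p ∉ K) (hf : Continuous f) (hfK : tsupport f ⊆ K) (c : ℕ) :
    Integrable (fun x => ‖x - p‖⁻¹ ^ c * f x) μ :=
  integrable_mul_of_continuousOn hK (fun _ hx => (contDiffAt_inv_norm_sub_pow (n := 0)
    (ne_of_mem_of_not_mem hx hp) c).continuousAt.continuousWithinAt) hf hfK

lemma integral_inv_norm_sub_pow_mul_le [IsFiniteMeasureOnCompacts μ] {f : E → ℝ} {R : ℝ}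
    (hf : Continuous f) (hfc : HasCompactSupport f) (hp : p ∉ tsupport f) (hf0 : 0 ≤ f)
    (hR : ∀ x ∈ tsupport f, ‖x - p‖ ≤ R) (c : ℕ) :
    ∫ x, ‖x - p‖⁻¹ ^ c * f x ∂μ ≤ R ^ 2 * ∫ x, ‖x - p‖⁻¹ ^ (c + 2) * f x ∂μ := by
  rw [← integral_const_mul]
  refine integral_mono (integrable_inv_norm_sub_pow_mul hfc hp hf subset_rfl c)
    ((integrable_inv_norm_sub_pow_mul hfc hp hf subset_rfl _).const_mul _) fun x => ?_
  by_cases hx : x ∈ tsupport f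
  · have hr : 0 < ‖x - p‖ := norm_pos_iff.2 (sub_ne_zero.2 (ne_of_mem_of_not_mem hx hp))
    calc ‖x - p‖⁻¹ ^ c * f x = ‖x - p‖ ^ 2 * (‖x - p‖⁻¹ ^ (c + 2) * f x) := by
          simp only [inv_pow]; field
      _ ≤ R ^ 2 * (‖x - p‖⁻¹ ^ (c + 2) * f x) := by
          have := hf0 x
          have := hR x hx
          gcongr
          exact mul_nonneg (by positivity) (hf0 x)
  · simp [image_eq_zero_of_notMem_tsupport hx]

lemma abs_integral_inv_norm_sub_pow_mul_mul_le [IsFiniteMeasureOnCompacts μ] {f g : E → ℝ}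
    {K : Set E} (hK : IsCompact K) (hp : p ∉ K) (hf : Continuous f) (hfK : tsupport f ⊆ K)
    (hg : Continuous g) (hgK : tsupport g ⊆ K) (c a : ℕ) :
    |∫ x, ‖x - p‖⁻¹ ^ (c + a) * (f x * g x) ∂μ| ≤
      (∫ x, ‖x - p‖⁻¹ ^ (c + 2 * a) * f x ^ 2 ∂μ + ∫ x, ‖x - p‖⁻¹ ^ c * g x ^ 2 ∂μ) / 2 := by
  have hInt {u : E → ℝ} (hu : Continuous u) (huK : tsupport u ⊆ K) (b : ℕ) :
      Integrable (fun x => ‖x - p‖⁻¹ ^ b * u x ^ 2) μ :=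
    integrable_inv_norm_sub_pow_mul hK hp (hu.pow 2) ((tsupport_sq_subset u).trans huK) b
  have hIntf := hInt hf hfK (c + 2 * a)
  have hIntg := hInt hg hgK c
  have hyoung (x : E) : |‖x - p‖⁻¹ ^ (c + a) * (f x * g x)| ≤
      (‖x - p‖⁻¹ ^ (c + 2 * a) * f x ^ 2 + ‖x - p‖⁻¹ ^ c * g x ^ 2) / 2 := by
    have h := mul_nonneg (pow_nonneg (inv_nonneg.2 (norm_nonneg (x - p))) c)
      (sq_nonneg (‖x - p‖⁻¹ ^ a * |f x| - |g x|))
    rw [abs_mul, abs_mul, abs_of_nonneg (by positivity)]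
    rw [sub_sq, mul_pow, sq_abs, sq_abs] at h
    ring_nf at h ⊢
    linarith
  rw [← integral_add hIntf hIntg, ← integral_div]
  exact abs_integral_le_integral_abs.trans (integral_mono_of_nonneg
    (.of_forall fun x => abs_nonneg _) ((hIntf.add hIntg).div_const 2) (.of_forall hyoung))

variable [FiniteDimensional ℝ E] [μ.IsAddHaarMeasure]

lemma integral_inv_norm_sub_pow_mul_radialDeriv (hg : ContDiff ℝ 1 g) (hgc : HasCompactSupport g)
    (hp : p ∉ tsupport g) (c : ℕ) :
    ∫ x, ‖x - p‖⁻¹ ^ c * radialDeriv p g x ∂μ =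
      (c - finrank ℝ E) * ∫ x, ‖x - p‖⁻¹ ^ c * g x ∂μ := by
  have hparts := integral_fderiv_apply_eq_neg_integral_mul_divergence (μ := μ) hg hgc
    (F := fun x => ‖x - p‖⁻¹ ^ c • (x - p)) fun x hx =>
      (contDiffAt_inv_norm_sub_pow (ne_of_mem_of_not_mem hx hp) c).smul
        (contDiffAt_id.sub contDiffAt_const)
  simp only [map_smul, smul_eq_mul] at hparts
  rw [← integral_const_mul]
  refine hparts.trans ((integral_neg _).symm.trans (integral_congr_ae (.of_forall fun x => ?_)))
  by_cases hx : x ∈ tsupport g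
  · dsimp only
    rw [divergence_inv_norm_sub_pow_smul_sub (ne_of_mem_of_not_mem hx hp)]
    ring
  · simp [image_eq_zero_of_notMem_tsupport hx]

lemma integral_inv_norm_sub_pow_mul_inner_gradient (hφ : ContDiff ℝ 2 φ) (hg : ContDiff ℝ 1 g)
    (hgc : HasCompactSupport g) (hp : p ∉ tsupport g) (c : ℕ) :
    ∫ x, ‖x - p‖⁻¹ ^ c * inner ℝ (∇ g x) (∇ φ x) ∂μ =
      c * ∫ x, ‖x - p‖⁻¹ ^ (c + 2) * (g x * radialDeriv p φ x) ∂μ -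
        ∫ x, ‖x - p‖⁻¹ ^ c * (g x * Δ φ x) ∂μ := by
  have hparts := integral_fderiv_apply_eq_neg_integral_mul_divergence (μ := μ) hg hgc
    (F := fun x => ‖x - p‖⁻¹ ^ c • ∇ φ x) fun x hx =>
      (contDiffAt_inv_norm_sub_pow (ne_of_mem_of_not_mem hx hp) c).smul
        (contDiff_gradient hφ le_rfl).contDiffAt
  have hInt {f : E → ℝ} (hf : Continuous f) (c : ℕ) :
      Integrable (fun x => ‖x - p‖⁻¹ ^ c * (g x * f x)) μ :=
    integrable_inv_norm_sub_pow_mul hgc hp (hg.continuous.mul hf) tsupport_mul_subset_left c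
  simp only [map_smul, smul_eq_mul] at hparts
  simp_rw [inner_gradient_left]
  rw [hparts, ← integral_const_mul, ← integral_neg,
    ← integral_sub ((hInt (contDiff_radialDeriv hφ (m := 1) le_rfl p).continuous _).const_mul _)
      (hInt (continuous_laplacian hφ) c)]
  refine integral_congr_ae (.of_forall fun x => ?_)
  by_cases hx : x ∈ tsupport g
  · dsimp only
    rw [divergence_inv_norm_sub_pow_smul_gradient hφ (ne_of_mem_of_not_mem hx hp)]
    ring
  · simp [image_eq_zero_of_notMem_tsupport hx]

lemma integral_inv_norm_sub_pow_mul_mul_radialDeriv (hφ : ContDiff ℝ 1 φ)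
    (hφc : HasCompactSupport φ) (hp : p ∉ tsupport φ) (c : ℕ) :
    ∫ x, ‖x - p‖⁻¹ ^ c * (φ x * radialDeriv p φ x) ∂μ =
      (c - finrank ℝ E) / 2 * ∫ x, ‖x - p‖⁻¹ ^ c * φ x ^ 2 ∂μ := by
  have hN (x) : radialDeriv p (fun y => φ y ^ 2) x = 2 * (φ x * radialDeriv p φ x) := by
    simp [radialDeriv, fderiv_fun_pow 2 (hφ.differentiable one_ne_zero).differentiableAt, mul_assoc]
  have h := integral_inv_norm_sub_pow_mul_radialDeriv (μ := μ) (hφ.pow 2)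
    (hφc.of_isClosed_subset (isClosed_tsupport _) (tsupport_sq_subset φ))
    (fun h => hp (tsupport_sq_subset φ h)) c
  simp_rw [hN, mul_left_comm _ (2 : ℝ)] at h
  rw [integral_const_mul] at h
  linarith

lemma integral_inv_norm_sub_pow_mul_mul_eulerOperator (hφ : ContDiff ℝ 1 φ)
    (hφc : HasCompactSupport φ) (hp : p ∉ tsupport φ) (c : ℕ) (β : ℝ) :
    ∫ x, ‖x - p‖⁻¹ ^ c * (φ x * eulerOperator p β φ x) ∂μ =
      ((c - finrank ℝ E) / 2 - β) * ∫ x, ‖x - p‖⁻¹ ^ c * φ x ^ 2 ∂μ := by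
  have hInt {f : E → ℝ} (hf : Continuous f) :
      Integrable (fun x => ‖x - p‖⁻¹ ^ c * (φ x * f x)) μ :=
    integrable_inv_norm_sub_pow_mul hφc hp (hφ.continuous.mul hf) tsupport_mul_subset_left c
  rw [sub_mul, ← integral_inv_norm_sub_pow_mul_mul_radialDeriv hφ hφc hp, ← integral_const_mul,
    ← integral_sub (hInt (contDiff_radialDeriv hφ (m := 0) le_rfl p).continuous)
      (by simpa only [sq] using (hInt hφ.continuous).const_mul β)]
  congr with x
  simp only [eulerOperator]
  ring

/- The value of `β` is forced: it makes the two quadratic terms in `∇φ` coming from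
`inner_gradient_eulerOperator` cancel after integration. -/
lemma integral_inv_norm_sub_pow_mul_inner_gradient_eulerOperator (hφ : ContDiff ℝ 2 φ)
    (hφc : HasCompactSupport φ) (hp : p ∉ tsupport φ) (c : ℕ) :
    ∫ x, ‖x - p‖⁻¹ ^ c *
      inner ℝ (∇ (eulerOperator p ((c + 2 - finrank ℝ E) / 2) φ) x) (∇ φ x) ∂μ = 0 := by
  have hgrad : ContDiff ℝ 1 (fun x => ‖∇ φ x‖ ^ 2) := (contDiff_gradient hφ le_rfl).norm_sq ℝ
  have hsupp := tsupport_sq_norm_gradient_subset φ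
  have hradial := integral_inv_norm_sub_pow_mul_radialDeriv (μ := μ) hgrad
    (hφc.of_isClosed_subset (isClosed_tsupport _) hsupp) (fun h => hp (hsupp h)) c
  have hInt := integrable_inv_norm_sub_pow_mul (μ := μ) hφc hp hgrad.continuous hsupp c
  have hIntN := integrable_inv_norm_sub_pow_mul (μ := μ) hφc hp
    (contDiff_radialDeriv hgrad (m := 0) le_rfl p).continuous
    ((tsupport_radialDeriv_subset p _).trans hsupp) c
  simp_rw [inner_gradient_eulerOperator hφ, mul_add, mul_left_comm (‖_ - p‖⁻¹ ^ c)]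
  rw [integral_add (hInt.const_mul _) (hIntN.const_mul _), integral_const_mul, integral_const_mul,
    hradial]
  ring

lemma rellich_identity (hφ : ContDiff ℝ 2 φ) (hφc : HasCompactSupport φ) (hp : p ∉ tsupport φ)
    {c : ℕ} {β : ℝ} (hβ : β = (c + 2 - finrank ℝ E) / 2) :
    ∫ x, ‖x - p‖⁻¹ ^ c * (eulerOperator p β φ x * Δ φ x) ∂μ =
      c * ∫ x, ‖x - p‖⁻¹ ^ (c + 2) * eulerOperator p β φ x ^ 2 ∂μ := by
  have hG := contDiff_eulerOperator hφ p β
  have hGs := tsupport_eulerOperator_subset p β φ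
  have hgreen := integral_inv_norm_sub_pow_mul_inner_gradient (μ := μ) hφ hG
    (hφc.of_isClosed_subset (isClosed_tsupport _) hGs) (fun h => hp (hGs h)) c
  have horth := integral_inv_norm_sub_pow_mul_mul_eulerOperator (μ := μ) (hφ.of_le one_le_two)
    hφc hp (c + 2) β
  have hInt {f : E → ℝ} (hf : Continuous f) :
      Integrable (fun x => ‖x - p‖⁻¹ ^ (c + 2) * (f x * eulerOperator p β φ x)) μ :=
    integrable_inv_norm_sub_pow_mul hφc hp (hf.mul hG.continuous)
      (tsupport_mul_subset_right.trans hGs) _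
  have hsq : ∫ x, ‖x - p‖⁻¹ ^ (c + 2) * (eulerOperator p β φ x * radialDeriv p φ x) ∂μ =
      ∫ x, ‖x - p‖⁻¹ ^ (c + 2) * eulerOperator p β φ x ^ 2 ∂μ +
        β * ∫ x, ‖x - p‖⁻¹ ^ (c + 2) * (φ x * eulerOperator p β φ x) ∂μ := by
    rw [← integral_const_mul, ← integral_add (by simpa only [sq] using hInt hG.continuous)
      ((hInt hφ.continuous).const_mul β)]
    congr with x
    simp only [eulerOperator]
    ring
  rw [hβ, integral_inv_norm_sub_pow_mul_inner_gradient_eulerOperator hφ hφc hp, ← hβ] at hgreen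
  rw [hsq, horth, hβ] at hgreen
  push_cast at hgreen
  rw [hβ]
  linarith

lemma integral_eulerOperator_sq_le (hφ : ContDiff ℝ 2 φ) (hφc : HasCompactSupport φ)
    (hp : p ∉ tsupport φ) {M : ℕ} {β : ℝ} (hβ : β = (M + 4 - finrank ℝ E) / 2) :
    ∫ x, ‖x - p‖⁻¹ ^ (M + 4) * eulerOperator p β φ x ^ 2 ∂μ ≤
      ∫ x, ‖x - p‖⁻¹ ^ M * Δ φ x ^ 2 ∂μ := by
  have hrellich := rellich_identity (μ := μ) hφ hφc hp (c := M + 2) (β := β)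
    (by push_cast; linarith)
  have hyoung := abs_integral_inv_norm_sub_pow_mul_mul_le (μ := μ) hφc hp
    (contDiff_eulerOperator hφ p β).continuous (tsupport_eulerOperator_subset p β φ)
    (continuous_laplacian hφ) (tsupport_laplacian_subset φ) M 2
  have hS : 0 ≤ ∫ x, ‖x - p‖⁻¹ ^ (M + 4) * eulerOperator p β φ x ^ 2 ∂μ :=
    integral_nonneg fun x => by positivity
  rw [hrellich] at hyoung
  push_cast at hyoung
  nlinarith [le_of_abs_le hyoung, mul_nonneg M.cast_nonneg hS]

lemma integral_inv_norm_sub_pow_mul_sq_le (hφ : ContDiff ℝ 2 φ) (hφc : HasCompactSupport φ)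
    (hp : p ∉ tsupport φ) {R : ℝ} (hR : ∀ x ∈ tsupport φ, ‖x - p‖ ≤ R) (M : ℕ) :
    ∫ x, ‖x - p‖⁻¹ ^ (M + 2) * φ x ^ 2 ∂μ ≤ R ^ 2 * ∫ x, ‖x - p‖⁻¹ ^ M * Δ φ x ^ 2 ∂μ := by
  set β : ℝ := (M + 4 - finrank ℝ E) / 2 with hβ
  have hGc := (contDiff_eulerOperator hφ p β).continuous
  have hGs := tsupport_eulerOperator_subset p β φ
  have hGs2 := (tsupport_sq_subset _).trans hGs
  have hyoung := abs_integral_inv_norm_sub_pow_mul_mul_le (μ := μ) hφc hp hφ.continuous subset_rfl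
    hGc hGs (M + 2) 0
  have hfactor : ((M + 2 : ℕ) - finrank ℝ E : ℝ) / 2 - β = -1 := by push_cast; linarith
  rw [add_zero, mul_zero, add_zero, integral_inv_norm_sub_pow_mul_mul_eulerOperator (μ := μ)
    (hφ.of_le one_le_two) hφc hp, hfactor, neg_one_mul, abs_neg] at hyoung
  calc ∫ x, ‖x - p‖⁻¹ ^ (M + 2) * φ x ^ 2 ∂μ
      ≤ ∫ x, ‖x - p‖⁻¹ ^ (M + 2) * eulerOperator p β φ x ^ 2 ∂μ := by
        linarith [le_of_abs_le hyoung]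
    _ ≤ R ^ 2 * ∫ x, ‖x - p‖⁻¹ ^ (M + 2 + 2) * eulerOperator p β φ x ^ 2 ∂μ :=
        integral_inv_norm_sub_pow_mul_le (hGc.pow 2) (hφc.of_isClosed_subset (isClosed_tsupport _)
          hGs2) (fun h => hp (hGs2 h)) (fun x => sq_nonneg _) (fun x hx => hR x (hGs2 hx)) _
    _ ≤ R ^ 2 * ∫ x, ‖x - p‖⁻¹ ^ M * Δ φ x ^ 2 ∂μ :=
        mul_le_mul_of_nonneg_left (integral_eulerOperator_sq_le hφ hφc hp hβ) (sq_nonneg R)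

lemma carleman_estimate (hφ : ContDiff ℝ 2 φ) (hφc : HasCompactSupport φ) (hp : p ∉ tsupport φ)
    {R : ℝ} (hR : ∀ x ∈ tsupport φ, ‖x - p‖ ≤ R) (M : ℕ) :
    ∫ x, ‖x - p‖⁻¹ ^ M * ‖∇ φ x‖ ^ 2 ∂μ ≤
      (1 + (R ^ 2 + M * (M + 2)) * R ^ 2) / 2 * ∫ x, ‖x - p‖⁻¹ ^ M * Δ φ x ^ 2 ∂μ := by
  set A := ∫ x, ‖x - p‖⁻¹ ^ (M + 2) * φ x ^ 2 ∂μ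
  set D := ∫ x, ‖x - p‖⁻¹ ^ M * Δ φ x ^ 2 ∂μ
  have hφ1 := hφ.of_le one_le_two
  have hAD : A ≤ R ^ 2 * D := integral_inv_norm_sub_pow_mul_sq_le hφ hφc hp hR M
  have hA : 0 ≤ A := integral_nonneg fun x => by positivity
  have hφA : ∫ x, ‖x - p‖⁻¹ ^ M * φ x ^ 2 ∂μ ≤ R ^ 2 * A :=
    integral_inv_norm_sub_pow_mul_le (hφ.continuous.pow 2)
      (hφc.of_isClosed_subset (isClosed_tsupport _) (tsupport_sq_subset φ))
      (fun h => hp (tsupport_sq_subset φ h)) (fun x => sq_nonneg _)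
      (fun x hx => hR x (tsupport_sq_subset φ hx)) M
  have hyoung := abs_integral_inv_norm_sub_pow_mul_mul_le (μ := μ) hφc hp hφ.continuous subset_rfl
    (continuous_laplacian hφ) (tsupport_laplacian_subset φ) M 0
  rw [add_zero, mul_zero, add_zero] at hyoung
  calc ∫ x, ‖x - p‖⁻¹ ^ M * ‖∇ φ x‖ ^ 2 ∂μ
      = M * ((M + 2 - finrank ℝ E) / 2 * A) - ∫ x, ‖x - p‖⁻¹ ^ M * (φ x * Δ φ x) ∂μ := by
        simp_rw [← real_inner_self_eq_norm_sq]
        rw [integral_inv_norm_sub_pow_mul_inner_gradient hφ hφ1 hφc hp,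
          integral_inv_norm_sub_pow_mul_mul_radialDeriv hφ1 hφc hp]
        push_cast
        rfl
    _ ≤ M * ((M + 2) / 2 * A) + (R ^ 2 * A + D) / 2 := by
        have hfactor : ((M + 2 - finrank ℝ E) / 2 : ℝ) ≤ (M + 2) / 2 :=
          div_le_div_of_nonneg_right (sub_le_self _ (Nat.cast_nonneg _)) zero_le_two
        have : M * ((M + 2 - finrank ℝ E) / 2 * A) ≤ M * ((M + 2) / 2 * A) :=
          mul_le_mul_of_nonneg_left (mul_le_mul_of_nonneg_right hfactor hA) M.cast_nonneg
        linarith [neg_le_of_abs_le hyoung]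
    _ = (D + (R ^ 2 + M * (M + 2)) * A) / 2 := by ring
    _ ≤ (D + (R ^ 2 + M * (M + 2)) * (R ^ 2 * D)) / 2 := by gcongr
    _ = (1 + (R ^ 2 + M * (M + 2)) * R ^ 2) / 2 * D := by ring

end Pole

section Whitney

lemma lintegral_mul_le_of_le_lintegral_kernel {X : Type*} [MeasurableSpace X] {ν : Measure X}
    [SFinite ν] {κ : X × X → ℝ≥0∞} (hκ : Measurable κ) {a f : X → ℝ≥0∞} (hf : Measurable f)
    {c A : ℝ≥0∞} (hc : c ≠ ∞) (ha : ∀ᵐ z ∂ν, a z ≤ c * ∫⁻ x, κ (z, x) ∂ν)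
    (hA : ∀ᵐ x ∂ν, ∫⁻ z, κ (z, x) * f z ∂ν ≤ A) :
    ∫⁻ z, a z * f z ∂ν ≤ c * (A * ν univ) := by
  calc ∫⁻ z, a z * f z ∂ν ≤ ∫⁻ z, c * ∫⁻ x, κ (z, x) * f z ∂ν ∂ν := by
        refine lintegral_mono_ae (ha.mono fun z hz => ?_)
        rw [lintegral_mul_const (f z) (by fun_prop), ← mul_assoc]
        exact mul_le_mul_left hz (f z)
    _ = c * ∫⁻ x, ∫⁻ z, κ (z, x) * f z ∂ν ∂ν := by
        rw [lintegral_const_mul' _ _ hc,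
          lintegral_lintegral_swap (hκ.mul (hf.comp measurable_fst)).aemeasurable]
    _ ≤ c * ∫⁻ _, A ∂ν := mul_le_mul_right (lintegral_mono_ae hA) c
    _ = c * (A * ν univ) := by rw [lintegral_const]

variable [FiniteDimensional ℝ E] [MeasurableSpace E] [BorelSpace E] {μ : Measure E}
  [μ.IsAddHaarMeasure] {δ : E → ℝ}

lemma measure_ball_mul_inv_pow_le_lintegral (hδ : LipschitzWith 1 δ) {z : E} (hz : 0 < δ z)
    (k : ℕ) :
    μ (ball 0 1) * ENNReal.ofReal ((δ z)⁻¹ ^ k) ≤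
      ENNReal.ofReal (2 ^ k * 8 ^ finrank ℝ E) * ∫⁻ x in {x | 0 < δ x},
        {x | dist z x < δ x / 2}.indicator
          (fun x => ENNReal.ofReal ((δ x)⁻¹ ^ (finrank ℝ E + k))) x ∂μ := by
  set d := finrank ℝ E
  have hball : ∀ x ∈ ball z (δ z / 4), 0 < δ x ∧ δ x ≤ 2 * δ z ∧ dist z x < δ x / 2 := by
    intro x hx
    have hzx := abs_le.1 (hδ.dist_le_mul z x)
    rw [mem_ball'] at hx
    simp only [NNReal.coe_one, one_mul] at hzx
    refine ⟨?_, ?_, ?_⟩ <;> linarith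
  have hconst : (δ z)⁻¹ ^ k =
      2 ^ k * 8 ^ d * ((δ z / 4) ^ d * (2 * δ z)⁻¹ ^ (d + k)) := by
    rw [show (8 : ℝ) = 2 * 4 by norm_num]
    simp only [mul_pow, div_pow, inv_pow, pow_add]
    field
  calc μ (ball 0 1) * ENNReal.ofReal ((δ z)⁻¹ ^ k)
      = ENNReal.ofReal (2 ^ k * 8 ^ d) *
          ∫⁻ _ in ball z (δ z / 4), ENNReal.ofReal ((2 * δ z)⁻¹ ^ (d + k)) ∂μ := by
        rw [setLIntegral_const, Measure.addHaar_ball_of_pos _ z (by positivity), hconst,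
          ENNReal.ofReal_mul (by positivity),
          ENNReal.ofReal_mul (p := (δ z / 4) ^ d) (by positivity)]
        ring
    _ ≤ ENNReal.ofReal (2 ^ k * 8 ^ d) * ∫⁻ x in ball z (δ z / 4),
          {x | dist z x < δ x / 2}.indicator
            (fun x => ENNReal.ofReal ((δ x)⁻¹ ^ (d + k))) x ∂μ := by
        refine mul_le_mul_right (setLIntegral_mono' measurableSet_ball fun x hx => ?_) _
        obtain ⟨hx0, hxz, hdist⟩ := hball x hx
        rw [indicator_of_mem (s := {x | dist z x < δ x / 2}) hdist]
        gcongr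
    _ ≤ _ := mul_le_mul_right (lintegral_mono_set fun x hx => (hball x hx).1) _

lemma measure_ball_mul_lintegral_inv_pow_mul_le (hδ : LipschitzWith 1 δ) {f : E → ℝ≥0∞}
    (hf : Measurable f) {k : ℕ} {A : ℝ≥0∞}
    (hA : ∀ x, 0 < δ x →
      ∫⁻ z in ball x (δ x / 2), f z ∂μ ≤ ENNReal.ofReal (δ x ^ (finrank ℝ E + k)) * A) :
    μ (ball 0 1) * ∫⁻ z in {z | 0 < δ z}, ENNReal.ofReal ((δ z)⁻¹ ^ k) * f z ∂μ ≤
      ENNReal.ofReal (2 ^ k * 8 ^ finrank ℝ E) * (A * μ {z | 0 < δ z}) := by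
  set d := finrank ℝ E
  let w (x : E) : ℝ≥0∞ := ENNReal.ofReal ((δ x)⁻¹ ^ (d + k))
  let S : Set (E × E) := {q | dist q.1 q.2 < δ q.2 / 2}
  have hδc := hδ.continuous
  have hw : Measurable w := (hδc.measurable.inv.pow_const _).ennreal_ofReal
  have hS : MeasurableSet S := (isOpen_lt (by fun_prop) (by fun_prop)).measurableSet
  have hΩ : MeasurableSet {z | 0 < δ z} := (isOpen_lt continuous_const hδc).measurableSet
  have hslice (x : E) (hx : x ∈ {z | 0 < δ z}) :
      ∫⁻ z in {z | 0 < δ z}, S.indicator (fun q => w q.2) (z, x) * f z ∂μ ≤ A := by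
    calc ∫⁻ z in {z | 0 < δ z}, S.indicator (fun q => w q.2) (z, x) * f z ∂μ
        ≤ ∫⁻ z, S.indicator (fun q => w q.2) (z, x) * f z ∂μ := setLIntegral_le_lintegral _ _
      _ = ∫⁻ z, w x * (ball x (δ x / 2)).indicator f z ∂μ := by
        refine lintegral_congr fun z => ?_
        by_cases hz : dist z x < δ x / 2 <;> simp [S, hz]
      _ = w x * ∫⁻ z in ball x (δ x / 2), f z ∂μ := by
        rw [lintegral_const_mul _ (hf.indicator measurableSet_ball),
          lintegral_indicator measurableSet_ball]
      _ ≤ w x * (ENNReal.ofReal (δ x ^ (d + k)) * A) := mul_le_mul_right (hA x hx) _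
      _ = A := by
        have hx' : 0 < δ x := hx
        rw [← mul_assoc, ← ENNReal.ofReal_mul (by positivity), inv_pow,
          inv_mul_cancel₀ (by positivity), ENNReal.ofReal_one, one_mul]
  rw [← lintegral_const_mul' _ _ measure_ball_lt_top.ne,
    ← Measure.restrict_apply_univ {z | 0 < δ z}]
  simp_rw [← mul_assoc (μ (ball 0 1))]
  exact lintegral_mul_le_of_le_lintegral_kernel ((hw.comp measurable_snd).indicator hS) hf
    ENNReal.ofReal_ne_top
    ((ae_restrict_iff' hΩ).2 (.of_forall fun z hz =>
      measure_ball_mul_inv_pow_le_lintegral hδ hz k))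
    ((ae_restrict_iff' hΩ).2 (.of_forall hslice))

end Whitney

section BoundaryDistance

lemma setIntegral_mul_eq_integral_mul_of_tsupport_subset {X : Type*} [TopologicalSpace X]
    [MeasurableSpace X] {μ : Measure X} {Ω : Set X} {w f : X → ℝ} (hf : tsupport f ⊆ Ω) :
    ∫ x in Ω, w x * f x ∂μ = ∫ x, w x * f x ∂μ :=
  setIntegral_eq_integral_of_forall_compl_eq_zero fun x hx => by
    rw [image_eq_zero_of_notMem_tsupport fun h => hx (hf h), mul_zero]

lemma infDist_compl_pos {X : Type*} [PseudoMetricSpace X] {Ω : Set X} (hΩ : IsOpen Ω)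
    (hne : Ωᶜ.Nonempty) {x : X} (hx : x ∈ Ω) : 0 < infDist x Ωᶜ :=
  (hΩ.isClosed_compl.notMem_iff_infDist_pos hne).1 (notMem_compl_iff.2 hx)

lemma integrable_inv_infDist_compl_pow_mul {X : Type*} [MetricSpace X] [MeasurableSpace X]
    [OpensMeasurableSpace X] {μ : Measure X} [IsFiniteMeasureOnCompacts μ] {Ω : Set X} {f : X → ℝ}
    (hΩ : IsOpen Ω) (hne : Ωᶜ.Nonempty) (hf : Continuous f) (hfc : HasCompactSupport f)
    (hfΩ : tsupport f ⊆ Ω) (k : ℕ) : Integrable (fun x => (infDist x Ωᶜ)⁻¹ ^ k * f x) μ :=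
  integrable_mul_of_continuousOn hfc (((continuous_infDist_pt _).continuousOn.inv₀ fun _ hx =>
    (infDist_compl_pos hΩ hne (hfΩ hx)).ne').pow k) hf subset_rfl

variable [MeasurableSpace E] [BorelSpace E] {μ : Measure E} {Ω : Set E} {p : E} {f φ : E → ℝ}

lemma setIntegral_le_pow_mul_integral_inv_norm_sub_pow_mul [IsFiniteMeasureOnCompacts μ]
    (hf : Continuous f) (hfc : HasCompactSupport f) (hp : p ∉ tsupport f) (hf0 : 0 ≤ f)
    {s : Set E} (hs : MeasurableSet s) {t : ℝ} (ht0 : 0 ≤ t) (ht : ∀ z ∈ s, ‖z - p‖ ≤ t) (M : ℕ) :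
    ∫ z in s, f z ∂μ ≤ t ^ M * ∫ z, ‖z - p‖⁻¹ ^ M * f z ∂μ := by
  have hInt := (integrable_inv_norm_sub_pow_mul (μ := μ) hfc hp hf subset_rfl M).const_mul (t ^ M)
  rw [← integral_const_mul]
  refine (setIntegral_mono_on (hf.integrable_of_hasCompactSupport hfc).integrableOn
    hInt.integrableOn hs fun z hz => ?_).trans (setIntegral_le_integral hInt
      (.of_forall fun z => mul_nonneg (by positivity) (mul_nonneg (by positivity) (hf0 z))))
  by_cases hzf : z ∈ tsupport f
  · have hr : 0 < ‖z - p‖ := norm_pos_iff.2 (sub_ne_zero.2 (ne_of_mem_of_not_mem hzf hp))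
    rw [← mul_assoc, ← mul_pow]
    refine le_mul_of_one_le_left (hf0 z) (one_le_pow₀ ?_)
    rw [← div_eq_mul_inv, one_le_div hr]
    exact ht z hz
  · simp [image_eq_zero_of_notMem_tsupport hzf]

lemma integral_inv_norm_sub_pow_mul_le_inv_infDist_compl [IsFiniteMeasureOnCompacts μ]
    (hΩ : IsOpen Ω) (hp : p ∉ Ω) (hf : Continuous f) (hfc : HasCompactSupport f)
    (hfΩ : tsupport f ⊆ Ω) (hf0 : 0 ≤ f) (M : ℕ) :
    ∫ z, ‖z - p‖⁻¹ ^ M * f z ∂μ ≤ ∫ z, (infDist z Ωᶜ)⁻¹ ^ M * f z ∂μ := by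
  refine integral_mono (integrable_inv_norm_sub_pow_mul hfc (fun h => hp (hfΩ h)) hf subset_rfl M)
    (integrable_inv_infDist_compl_pow_mul hΩ ⟨p, hp⟩ hf hfc hfΩ M) fun z => ?_
  by_cases hz : z ∈ tsupport f
  · have hδ := infDist_compl_pos hΩ ⟨p, hp⟩ (hfΩ hz)
    have hle : infDist z Ωᶜ ≤ ‖z - p‖ := dist_eq_norm z p ▸ infDist_le_dist_of_mem hp
    exact mul_le_mul_of_nonneg_right
      (pow_le_pow_left₀ (by positivity) (inv_anti₀ hδ hle) M) (hf0 z)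
  · simp [image_eq_zero_of_notMem_tsupport hz]

variable [FiniteDimensional ℝ E] [μ.IsAddHaarMeasure]

lemma setIntegral_ball_sq_norm_gradient_le (hΩ : IsOpen Ω) (hΩb : Bornology.IsBounded Ω)
    (hne : Ωᶜ.Nonempty) {x : E} (hx : x ∈ Ω) (hφ : ContDiff ℝ 2 φ) (hφc : HasCompactSupport φ)
    (hφΩ : tsupport φ ⊆ Ω) (M : ℕ) :
    ∫ z in ball x (infDist x Ωᶜ / 2), ‖∇ φ z‖ ^ 2 ∂μ ≤ (3 / 2 * infDist x Ωᶜ) ^ M *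
      ((1 + (diam Ω ^ 2 + M * (M + 2)) * diam Ω ^ 2) / 2 *
        ∫ z, (infDist z Ωᶜ)⁻¹ ^ M * Δ φ z ^ 2 ∂μ) := by
  obtain ⟨p, hpΩ, hxp⟩ := exists_mem_frontier_infDist_compl_eq_dist hx (nonempty_compl.1 hne)
  have hp : p ∉ Ω := hΩ.frontier_eq ▸ hpΩ |>.2
  have hpφ : p ∉ tsupport φ := fun h => hp (hφΩ h)
  have hdiam : ∀ z ∈ tsupport φ, ‖z - p‖ ≤ diam Ω := fun z hz => by
    rw [← dist_eq_norm, ← diam_closure]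
    exact dist_le_diam_of_mem hΩb.closure (subset_closure (hφΩ hz)) hpΩ.1
  have hball : ∀ z ∈ ball x (infDist x Ωᶜ / 2), ‖z - p‖ ≤ 3 / 2 * infDist x Ωᶜ := fun z hz => by
    rw [← dist_eq_norm]
    linarith [dist_triangle z x p, mem_ball.1 hz]
  have hgrad := tsupport_sq_norm_gradient_subset φ
  have hlap := (tsupport_sq_subset _).trans (tsupport_laplacian_subset φ)
  have hradius : 0 ≤ 3 / 2 * infDist x Ωᶜ := mul_nonneg (by norm_num) infDist_nonneg
  calc ∫ z in ball x (infDist x Ωᶜ / 2), ‖∇ φ z‖ ^ 2 ∂μ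
      ≤ (3 / 2 * infDist x Ωᶜ) ^ M * ∫ z, ‖z - p‖⁻¹ ^ M * ‖∇ φ z‖ ^ 2 ∂μ :=
        setIntegral_le_pow_mul_integral_inv_norm_sub_pow_mul
          ((contDiff_gradient (m := 1) hφ le_rfl).continuous.norm.pow 2)
          (hφc.of_isClosed_subset (isClosed_tsupport _) hgrad) (fun h => hpφ (hgrad h))
          (fun z => sq_nonneg _) measurableSet_ball hradius hball M
    _ ≤ (3 / 2 * infDist x Ωᶜ) ^ M * ((1 + (diam Ω ^ 2 + M * (M + 2)) * diam Ω ^ 2) / 2 *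
          ∫ z, ‖z - p‖⁻¹ ^ M * Δ φ z ^ 2 ∂μ) :=
        mul_le_mul_of_nonneg_left (carleman_estimate hφ hφc hpφ hdiam M) (by positivity)
    _ ≤ _ :=
        mul_le_mul_of_nonneg_left (mul_le_mul_of_nonneg_left
          (integral_inv_norm_sub_pow_mul_le_inv_infDist_compl hΩ hp
            ((continuous_laplacian hφ).pow 2)
            (hφc.of_isClosed_subset (isClosed_tsupport _) hlap) (hlap.trans hφΩ)
            (fun z => sq_nonneg _) M) (by positivity)) (by positivity)

lemma measureReal_ball_mul_integral_inv_infDist_compl_pow_mul_le (hΩ : IsOpen Ω)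
    (hΩb : Bornology.IsBounded Ω) (hne : Ωᶜ.Nonempty) (hf : Continuous f)
    (hfc : HasCompactSupport f) (hfΩ : tsupport f ⊆ Ω) (hf0 : 0 ≤ f) {k : ℕ} {A : ℝ} (hA0 : 0 ≤ A)
    (hA : ∀ x ∈ Ω, ∫ z in ball x (infDist x Ωᶜ / 2), f z ∂μ ≤
      infDist x Ωᶜ ^ (finrank ℝ E + k) * A) :
    μ.real (ball 0 1) * ∫ z, (infDist z Ωᶜ)⁻¹ ^ k * f z ∂μ ≤
      2 ^ k * 8 ^ finrank ℝ E * (A * μ.real Ω) := by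
  have hΩpos : {z | 0 < infDist z Ωᶜ} = Ω := by
    ext z
    refine ⟨fun hz => by_contra fun h => ?_, infDist_compl_pos hΩ hne⟩
    exact (mem_ofPred.1 hz).ne' (infDist_zero_of_mem h)
  have hmean := measure_ball_mul_lintegral_inv_pow_mul_le (μ := μ)
    (lipschitz_infDist_pt Ωᶜ) (f := fun z => ENNReal.ofReal (f z))
    hf.measurable.ennreal_ofReal (k := k) (A := ENNReal.ofReal A) fun x hx => by
      rw [← ofReal_integral_eq_lintegral_ofReal
        (hf.integrable_of_hasCompactSupport hfc).integrableOn (.of_forall hf0),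
        ← ENNReal.ofReal_mul (pow_nonneg infDist_nonneg _)]
      exact ENNReal.ofReal_le_ofReal (hA x (hΩpos.subset hx))
  have hweight (z : E) : 0 ≤ (infDist z Ωᶜ)⁻¹ ^ k := pow_nonneg (inv_nonneg.2 infDist_nonneg) k
  simp_rw [← ENNReal.ofReal_mul (hweight _)] at hmean
  rw [hΩpos, ← ofReal_integral_eq_lintegral_ofReal
      (integrable_inv_infDist_compl_pow_mul hΩ hne hf hfc hfΩ k).integrableOn
      (.of_forall fun z => mul_nonneg (hweight z) (hf0 z)),
    setIntegral_mul_eq_integral_mul_of_tsupport_subset hfΩ,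
    ← ofReal_measureReal measure_ball_lt_top.ne, ← ofReal_measureReal hΩb.measure_lt_top.ne,
    ← ENNReal.ofReal_mul hA0, ← ENNReal.ofReal_mul measureReal_nonneg,
    ← ENNReal.ofReal_mul (by positivity)] at hmean
  exact (ENNReal.ofReal_le_ofReal_iff (by positivity)).1 hmean

lemma exists_integral_inv_infDist_compl_pow_mul_sq_norm_gradient_le (μ : Measure E)
    [μ.IsAddHaarMeasure] (hΩ : IsOpen Ω) (hΩb : Bornology.IsBounded Ω) (hne : Ωᶜ.Nonempty)
    {k m : ℕ} (hkm : finrank ℝ E + k ≤ m) :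
    ∃ C : ℝ, 0 ≤ C ∧ ∀ φ : E → ℝ, ContDiff ℝ 2 φ → HasCompactSupport φ → tsupport φ ⊆ Ω →
      ∫ z, (infDist z Ωᶜ)⁻¹ ^ k * ‖∇ φ z‖ ^ 2 ∂μ ≤
        C * ∫ z, (infDist z Ωᶜ)⁻¹ ^ m * Δ φ z ^ 2 ∂μ := by
  set d := finrank ℝ E
  set K : ℝ := (1 + (diam Ω ^ 2 + m * (m + 2)) * diam Ω ^ 2) / 2
  set B : ℝ := (3 / 2) ^ m * diam Ω ^ (m - (d + k)) * K
  have hball : 0 < μ.real (ball 0 1) := ENNReal.toReal_pos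
    (measure_ball_pos μ 0 one_pos).ne' measure_ball_lt_top.ne
  refine ⟨2 ^ k * 8 ^ d * (B * μ.real Ω) / μ.real (ball 0 1), by positivity,
    fun φ hφ hφc hφΩ => ?_⟩
  set I := ∫ z, (infDist z Ωᶜ)⁻¹ ^ m * Δ φ z ^ 2 ∂μ
  have hI : 0 ≤ I := integral_nonneg fun z =>
    mul_nonneg (pow_nonneg (inv_nonneg.2 infDist_nonneg) m) (sq_nonneg _)
  have hsmall : ∀ x ∈ Ω, ∫ z in ball x (infDist x Ωᶜ / 2), ‖∇ φ z‖ ^ 2 ∂μ ≤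
      infDist x Ωᶜ ^ (d + k) * (B * I) := fun x hx => by
    have hδ : infDist x Ωᶜ ≤ diam Ω := by
      obtain ⟨p, hpΩ, hxp⟩ := exists_mem_frontier_infDist_compl_eq_dist hx (nonempty_compl.1 hne)
      rw [hxp, ← diam_closure]
      exact dist_le_diam_of_mem hΩb.closure (subset_closure hx) hpΩ.1
    calc ∫ z in ball x (infDist x Ωᶜ / 2), ‖∇ φ z‖ ^ 2 ∂μ
        ≤ (3 / 2 * infDist x Ωᶜ) ^ m * (K * I) :=
          setIntegral_ball_sq_norm_gradient_le hΩ hΩb hne hx hφ hφc hφΩ m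
      _ = infDist x Ωᶜ ^ (d + k) * ((3 / 2) ^ m * infDist x Ωᶜ ^ (m - (d + k)) * K * I) := by
          rw [mul_pow, ← pow_mul_pow_sub (infDist x Ωᶜ) hkm]
          ring
      _ ≤ infDist x Ωᶜ ^ (d + k) * (B * I) := by
          have := infDist_nonneg (x := x) (s := Ωᶜ)
          simp only [B]
          gcongr
  have hgrad := tsupport_sq_norm_gradient_subset φ
  have hmean := measureReal_ball_mul_integral_inv_infDist_compl_pow_mul_le (μ := μ) hΩ hΩb hne
    (f := fun z => ‖∇ φ z‖ ^ 2)
    ((contDiff_gradient (m := 1) hφ le_rfl).continuous.norm.pow 2)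
    (hφc.of_isClosed_subset (isClosed_tsupport _) hgrad) (hgrad.trans hφΩ)
    (fun z => sq_nonneg _) (by positivity) hsmall
  rw [div_mul_eq_mul_div, le_div_iff₀' hball]
  linarith

end BoundaryDistance

section Duality

lemma exists_inner_eq_inner_of_norm_le {𝕜 V H₁ H₂ : Type*} [RCLike 𝕜] [AddCommGroup V] [Module 𝕜 V]
    [NormedAddCommGroup H₁] [InnerProductSpace 𝕜 H₁] [CompleteSpace H₁]
    [NormedAddCommGroup H₂] [InnerProductSpace 𝕜 H₂] [CompleteSpace H₂]
    {A : V →ₗ[𝕜] H₁} {P : V →ₗ[𝕜] H₂} {M : ℝ} (hM : 0 ≤ M) (hPA : ∀ φ, ‖P φ‖ ≤ M * ‖A φ‖)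
    (w : H₂) : ∃ v : H₁, ‖v‖ ≤ M * ‖w‖ ∧ ∀ φ, inner 𝕜 v (A φ) = inner 𝕜 w (P φ) := by
  let S := (LinearMap.range A).topologicalClosure
  let A' : V →ₗ[𝕜] S := A.codRestrict S fun φ =>
    Submodule.le_topologicalClosure _ (LinearMap.mem_range_self A φ)
  have hdense : DenseRange A' := by
    refine Subtype.dense_iff.2 fun y hy => ?_
    rwa [← range_comp]
  have hT := LinearMap.extendOfNorm_eq (f := P) hdense ⟨M, hPA⟩
  refine ⟨(P.extendOfNorm A').adjoint w, ?_, fun φ => ?_⟩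
  · refine ((P.extendOfNorm A').adjoint.le_opNorm w).trans ?_
    rw [LinearIsometryEquiv.norm_map]
    gcongr
    exact LinearMap.opNorm_extendOfNorm_le hdense hM hPA
  · rw [← hT φ, ← ContinuousLinearMap.adjoint_inner_left]
    rfl

variable {X : Type*} [MeasurableSpace X] {ν : Measure X}

lemma inner_toLp {f g : X → ℝ} (hf : MemLp f 2 ν) (hg : MemLp g 2 ν) :
    inner ℝ (hf.toLp f) (hg.toLp g) = ∫ x, f x * g x ∂ν := by
  rw [L2.inner_def]
  refine integral_congr_ae ?_
  filter_upwards [hf.coeFn_toLp, hg.coeFn_toLp] with x hfx hgx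
  rw [hfx, hgx, RCLike.inner_apply', RCLike.conj_to_real]

lemma norm_sq_toLp {f : X → ℝ} (hf : MemLp f 2 ν) : ‖hf.toLp f‖ ^ 2 = ∫ x, f x ^ 2 ∂ν := by
  rw [← real_inner_self_eq_norm_sq, inner_toLp hf hf]
  simp_rw [sq]

variable {V : Type*} [AddCommGroup V] [Module ℝ V]

/-- The linear map into `L²` induced by a linear map into functions with square integrable
values. -/
def toL2 (A : V →ₗ[ℝ] X → ℝ) (hA : ∀ φ, MemLp (A φ) 2 ν) : V →ₗ[ℝ] Lp ℝ 2 ν where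
  toFun φ := (hA φ).toLp (A φ)
  map_add' φ ψ := by
    rw [← MemLp.toLp_add]
    congr 1
    exact map_add A φ ψ
  map_smul' c φ := by
    rw [RingHom.id_apply, ← MemLp.toLp_const_smul]
    congr 1
    exact map_smul A c φ

lemma exists_integral_mul_eq_of_integral_sq_le {A P : V →ₗ[ℝ] X → ℝ} {w : X → ℝ} {C : ℝ}
    (hA : ∀ φ, MemLp (A φ) 2 ν) (hP : ∀ φ, MemLp (P φ) 2 ν) (hw : MemLp w 2 ν) (hC : 0 ≤ C)
    (hPA : ∀ φ, ∫ x, P φ x ^ 2 ∂ν ≤ C * ∫ x, A φ x ^ 2 ∂ν) :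
    ∃ v : X → ℝ, MemLp v 2 ν ∧ ∫ x, v x ^ 2 ∂ν ≤ C * ∫ x, w x ^ 2 ∂ν ∧
      ∀ φ, ∫ x, v x * A φ x ∂ν = ∫ x, w x * P φ x ∂ν := by
  obtain ⟨v, hvw, hv⟩ := exists_inner_eq_inner_of_norm_le (A := toL2 A hA) (P := toL2 P hP)
    (Real.sqrt_nonneg C) (fun φ => by
      refine le_of_sq_le_sq ?_ (by positivity)
      rw [mul_pow, Real.sq_sqrt hC]
      exact ((norm_sq_toLp (hP φ)).trans_le (hPA φ)).trans_eq
        (congrArg (C * ·) (norm_sq_toLp (hA φ)).symm)) (hw.toLp w)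
  have hvm : MemLp v 2 ν := Lp.memLp v
  rw [← Lp.toLp_coeFn v hvm] at hvw hv
  refine ⟨v, hvm, ?_, fun φ => ?_⟩
  · rw [← norm_sq_toLp hvm, ← norm_sq_toLp hw]
    calc ‖hvm.toLp v‖ ^ 2 ≤ (√C * ‖hw.toLp w‖) ^ 2 := pow_le_pow_left₀ (norm_nonneg _) hvw 2
      _ = C * ‖hw.toLp w‖ ^ 2 := by rw [mul_pow, Real.sq_sqrt hC]
  · rw [← inner_toLp hvm (hA φ), ← inner_toLp hw (hP φ)]
    exact hv φ

lemma sqrt_mul_sq_ae_eq {ρ : X → ℝ} (hρ : ∀ᵐ x ∂ν, 0 < ρ x) (f : X → ℝ) :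
    (fun x => (√(ρ x) * f x) ^ 2) =ᵐ[ν] fun x => ρ x * f x ^ 2 :=
  hρ.mono fun x hx => by simp only [mul_pow, Real.sq_sqrt hx.le]

lemma memLp_two_sqrt_mul_iff {ρ f : X → ℝ} (hρ : ∀ᵐ x ∂ν, 0 < ρ x)
    (hρm : AEStronglyMeasurable ρ ν) (hf : AEStronglyMeasurable f ν) :
    MemLp (fun x => √(ρ x) * f x) 2 ν ↔ Integrable (fun x => ρ x * f x ^ 2) ν := by
  rw [memLp_two_iff_integrable_sq (f := fun x => √(ρ x) * f x)
    ((Real.continuous_sqrt.comp_aestronglyMeasurable hρm).mul hf)]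
  exact integrable_congr (sqrt_mul_sq_ae_eq hρ f)

lemma exists_integral_mul_eq_of_weighted_integral_sq_le {A P : V →ₗ[ℝ] X → ℝ} {w a b : X → ℝ}
    {C : ℝ} (ha : ∀ᵐ x ∂ν, 0 < a x) (ham : AEStronglyMeasurable a ν)
    (hb : ∀ᵐ x ∂ν, 0 < b x) (hbm : AEStronglyMeasurable b ν)
    (hA : ∀ φ, AEStronglyMeasurable (A φ) ν)
    (hAi : ∀ φ, Integrable (fun x => (a x)⁻¹ * A φ x ^ 2) ν)
    (hP : ∀ φ, AEStronglyMeasurable (P φ) ν)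
    (hPi : ∀ φ, Integrable (fun x => (b x)⁻¹ * P φ x ^ 2) ν)
    (hw : AEStronglyMeasurable w ν) (hwi : Integrable (fun x => b x * w x ^ 2) ν) (hC : 0 ≤ C)
    (hPA : ∀ φ, ∫ x, (b x)⁻¹ * P φ x ^ 2 ∂ν ≤ C * ∫ x, (a x)⁻¹ * A φ x ^ 2 ∂ν) :
    ∃ v : X → ℝ, AEStronglyMeasurable v ν ∧ Integrable (fun x => a x * v x ^ 2) ν ∧
      ∫ x, a x * v x ^ 2 ∂ν ≤ C * ∫ x, b x * w x ^ 2 ∂ν ∧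
      ∀ φ, ∫ x, v x * A φ x ∂ν = ∫ x, w x * P φ x ∂ν := by
  have ha' : ∀ᵐ x ∂ν, 0 < (a x)⁻¹ := ha.mono fun _ => inv_pos.2
  have hb' : ∀ᵐ x ∂ν, 0 < (b x)⁻¹ := hb.mono fun _ => inv_pos.2
  have ham' : AEStronglyMeasurable (fun x => (a x)⁻¹) ν := ham.aemeasurable.inv.aestronglyMeasurable
  have hbm' : AEStronglyMeasurable (fun x => (b x)⁻¹) ν := hbm.aemeasurable.inv.aestronglyMeasurable
  obtain ⟨g, hg, hgw, hgφ⟩ := exists_integral_mul_eq_of_integral_sq_le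
    (A := LinearMap.mulLeft ℝ (fun x => √(a x)⁻¹) ∘ₗ A)
    (P := LinearMap.mulLeft ℝ (fun x => √(b x)⁻¹) ∘ₗ P)
    (fun φ => (memLp_two_sqrt_mul_iff ha' ham' (hA φ)).2 (hAi φ))
    (fun φ => (memLp_two_sqrt_mul_iff hb' hbm' (hP φ)).2 (hPi φ))
    ((memLp_two_sqrt_mul_iff hb hbm hw).2 hwi) hC
    (fun φ => ((integral_congr_ae (sqrt_mul_sq_ae_eq hb' (P φ))).trans_le (hPA φ)).trans_eq
      (congrArg (C * ·) (integral_congr_ae (sqrt_mul_sq_ae_eq ha' (A φ))).symm))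
  have hv : (fun x => a x * (√(a x)⁻¹ * g x) ^ 2) =ᵐ[ν] fun x => g x ^ 2 := ha.mono fun x hx => by
    simp only [mul_pow, Real.sq_sqrt (inv_pos.2 hx).le]
    field
  refine ⟨fun x => √(a x)⁻¹ * g x, (Real.continuous_sqrt.comp_aestronglyMeasurable ham').mul hg.1,
    hg.integrable_sq.congr hv.symm, ?_, fun φ => ?_⟩
  · rw [integral_congr_ae hv, ← integral_congr_ae (sqrt_mul_sq_ae_eq hb w)]
    exact hgw
  · calc ∫ x, √(a x)⁻¹ * g x * A φ x ∂ν = ∫ x, g x * (√(a x)⁻¹ * A φ x) ∂ν := by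
          simp only [mul_left_comm (g _), mul_assoc]
      _ = ∫ x, √(b x) * w x * (√(b x)⁻¹ * P φ x) ∂ν := hgφ φ
      _ = ∫ x, w x * P φ x ∂ν := integral_congr_ae (hb.mono fun x hx => by
          have : √(b x) ≠ 0 := (Real.sqrt_pos.2 hx).ne'
          simp only [Real.sqrt_inv]
          field)

end Duality

section WeakSolution

/-- The space of `C²` functions with compact support contained in `Ω`, against which weak solutions
in `Ω` are tested. -/
def testFunctions (Ω : Set E) : Submodule ℝ (E → ℝ) where
  carrier := {φ | ContDiff ℝ 2 φ ∧ HasCompactSupport φ ∧ tsupport φ ⊆ Ω}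
  zero_mem' := ⟨contDiff_const, .zero, by simp [tsupport]⟩
  add_mem' hφ hψ := ⟨hφ.1.add hψ.1, hφ.2.1.add hψ.2.1,
    (tsupport_add _ _).trans (union_subset hφ.2.2 hψ.2.2)⟩
  smul_mem' c φ hφ := ⟨contDiff_const.smul hφ.1, hφ.2.1.smul_left (f := fun _ => c),
    (tsupport_smul_subset_right (fun _ => c) φ).trans hφ.2.2⟩

/-- The derivative in the direction `e`, as a linear map on test functions. -/
def testFunctions.dirDeriv (Ω : Set E) (e : E) : testFunctions Ω →ₗ[ℝ] E → ℝ where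
  toFun φ z := fderiv ℝ φ z e
  map_add' φ ψ := funext fun z => by
    simp [fderiv_add (φ.2.1.differentiable two_ne_zero z) (ψ.2.1.differentiable two_ne_zero z)]
  map_smul' c φ := funext fun z => by
    simp [fderiv_const_smul (φ.2.1.differentiable two_ne_zero z)]

variable [MeasurableSpace E] [BorelSpace E] {Ω : Set E}

lemma integrableOn_inv_infDist_compl_pow_mul_sq {μ : Measure E} [IsFiniteMeasureOnCompacts μ]
    (hΩ : IsOpen Ω) (hne : Ωᶜ.Nonempty) {φ f : E → ℝ} (hφ : φ ∈ testFunctions Ω) (hf : Continuous f)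
    (hfφ : tsupport f ⊆ tsupport φ) (k : ℕ) :
    IntegrableOn (fun z => (infDist z Ωᶜ)⁻¹ ^ k * f z ^ 2) Ω μ :=
  have hsupp := (tsupport_sq_subset f).trans hfφ
  (integrable_inv_infDist_compl_pow_mul hΩ hne (hf.pow 2)
    (hφ.2.1.of_isClosed_subset (isClosed_tsupport _) hsupp) (hsupp.trans hφ.2.2) k).integrableOn

variable [FiniteDimensional ℝ E]

/-- The Laplacian, as a linear map on test functions. -/
def testFunctions.laplacian (Ω : Set E) : testFunctions Ω →ₗ[ℝ] E → ℝ where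
  toFun φ := Δ φ.1
  map_add' φ ψ := funext fun _ => φ.2.1.contDiffAt.laplacian_add ψ.2.1.contDiffAt
  map_smul' c φ := funext fun _ => laplacian_smul c φ.2.1.contDiffAt

lemma exists_setIntegral_inv_infDist_compl_pow_mul_sq_fderiv_apply_le (μ : Measure E)
    [μ.IsAddHaarMeasure] (hΩ : IsOpen Ω) (hΩb : Bornology.IsBounded Ω) (hne : Ωᶜ.Nonempty)
    {k m : ℕ} (hkm : finrank ℝ E + k ≤ m) (e : E) :
    ∃ C : ℝ, 0 < C ∧ ∀ φ ∈ testFunctions Ω,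
      ∫ z in Ω, (infDist z Ωᶜ)⁻¹ ^ k * fderiv ℝ φ z e ^ 2 ∂μ ≤
        C * ∫ z in Ω, (infDist z Ωᶜ)⁻¹ ^ m * Δ φ z ^ 2 ∂μ := by
  obtain ⟨C, hC, hgrad⟩ :=
    exists_integral_inv_infDist_compl_pow_mul_sq_norm_gradient_le μ hΩ hΩb hne hkm
  refine ⟨‖e‖ ^ 2 * C + 1, by positivity, fun φ ⟨hφ, hφc, hφΩ⟩ => ?_⟩
  have hweight (j : ℕ) (z : E) : 0 ≤ (infDist z Ωᶜ)⁻¹ ^ j :=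
    pow_nonneg (inv_nonneg.2 infDist_nonneg) j
  have hsetΔ : ∫ z in Ω, (infDist z Ωᶜ)⁻¹ ^ m * Δ φ z ^ 2 ∂μ =
      ∫ z, (infDist z Ωᶜ)⁻¹ ^ m * Δ φ z ^ 2 ∂μ :=
    setIntegral_mul_eq_integral_mul_of_tsupport_subset
      (((tsupport_sq_subset _).trans (tsupport_laplacian_subset φ)).trans hφΩ)
  have hgrads := tsupport_sq_norm_gradient_subset φ
  have hInt : Integrable (fun z => ‖e‖ ^ 2 * ((infDist z Ωᶜ)⁻¹ ^ k * ‖∇ φ z‖ ^ 2)) μ :=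
    (integrable_inv_infDist_compl_pow_mul hΩ hne
      ((contDiff_gradient (m := 1) hφ le_rfl).continuous.norm.pow 2)
      (hφc.of_isClosed_subset (isClosed_tsupport _) hgrads) (hgrads.trans hφΩ) k).const_mul _
  have hpoint (z : E) : (infDist z Ωᶜ)⁻¹ ^ k * fderiv ℝ φ z e ^ 2 ≤
      ‖e‖ ^ 2 * ((infDist z Ωᶜ)⁻¹ ^ k * ‖∇ φ z‖ ^ 2) := by
    rw [mul_left_comm, ← mul_pow, ← inner_gradient_left, mul_comm ‖e‖]
    exact mul_le_mul_of_nonneg_left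
      (sq_le_sq.2 ((abs_real_inner_le_norm _ _).trans (le_abs_self _))) (hweight k z)
  rw [hsetΔ]
  calc ∫ z in Ω, (infDist z Ωᶜ)⁻¹ ^ k * fderiv ℝ φ z e ^ 2 ∂μ
      ≤ ∫ z in Ω, ‖e‖ ^ 2 * ((infDist z Ωᶜ)⁻¹ ^ k * ‖∇ φ z‖ ^ 2) ∂μ :=
        integral_mono_of_nonneg (.of_forall fun z => mul_nonneg (hweight k z) (sq_nonneg _))
          hInt.restrict (.of_forall hpoint)
    _ ≤ ‖e‖ ^ 2 * ∫ z, (infDist z Ωᶜ)⁻¹ ^ k * ‖∇ φ z‖ ^ 2 ∂μ := by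
        rw [← integral_const_mul]
        exact setIntegral_le_integral hInt (.of_forall fun z =>
          mul_nonneg (sq_nonneg _) (mul_nonneg (hweight k z) (sq_nonneg _)))
    _ ≤ ‖e‖ ^ 2 * (C * ∫ z, (infDist z Ωᶜ)⁻¹ ^ m * Δ φ z ^ 2 ∂μ) := by
        gcongr
        exact hgrad φ hφ hφc hφΩ
    _ ≤ (‖e‖ ^ 2 * C + 1) * ∫ z, (infDist z Ωᶜ)⁻¹ ^ m * Δ φ z ^ 2 ∂μ := by
        rw [← mul_assoc]
        exact mul_le_mul_of_nonneg_right (by linarith)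
          (integral_nonneg fun z => mul_nonneg (hweight m z) (sq_nonneg _))

theorem laplace_weighted_solution_general [Nontrivial E] (μ : Measure E) [μ.IsAddHaarMeasure]
    (hΩ : IsOpen Ω) (hΩb : Bornology.IsBounded Ω) {k m : ℕ} (hkm : finrank ℝ E + k ≤ m) (e : E) :
    ∃ C : ℝ, 0 < C ∧ ∀ w : E → ℝ, AEStronglyMeasurable w (μ.restrict Ω) →
      IntegrableOn (fun z => w z ^ 2 * infDist z Ωᶜ ^ k) Ω μ →
      ∃ v : E → ℝ, AEStronglyMeasurable v (μ.restrict Ω) ∧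
        (∀ φ : E → ℝ, ContDiff ℝ 2 φ → HasCompactSupport φ → tsupport φ ⊆ Ω →
          ∫ z in Ω, v z * Δ φ z ∂μ = -∫ z in Ω, w z * fderiv ℝ φ z e ∂μ) ∧
        IntegrableOn (fun z => v z ^ 2 * infDist z Ωᶜ ^ m) Ω μ ∧
        ∫ z in Ω, v z ^ 2 * infDist z Ωᶜ ^ m ∂μ ≤
          C * ∫ z in Ω, w z ^ 2 * infDist z Ωᶜ ^ k ∂μ := by
  have hne : Ωᶜ.Nonempty := nonempty_compl.2 fun h => NormedSpace.unbounded_univ ℝ E (h ▸ hΩb)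
  obtain ⟨C, hC, hapriori⟩ :=
    exists_setIntegral_inv_infDist_compl_pow_mul_sq_fderiv_apply_le μ hΩ hΩb hne hkm e
  refine ⟨C, hC, fun w hw hwi => ?_⟩
  have hweight (j : ℕ) : ∀ᵐ z ∂μ.restrict Ω, 0 < infDist z Ωᶜ ^ j :=
    (ae_restrict_mem hΩ.measurableSet).mono fun z hz => pow_pos (infDist_compl_pos hΩ hne hz) j
  have hweightm (j : ℕ) : AEStronglyMeasurable (fun z => infDist z Ωᶜ ^ j) (μ.restrict Ω) :=
    ((continuous_infDist_pt Ωᶜ).pow j).aestronglyMeasurable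
  have hΔ (φ : testFunctions Ω) := continuous_laplacian φ.2.1
  have hD (φ : testFunctions Ω) : Continuous (testFunctions.dirDeriv Ω e φ) :=
    (φ.2.1.continuous_fderiv two_ne_zero).clm_apply continuous_const
  have hΔi (φ : testFunctions Ω) := integrableOn_inv_infDist_compl_pow_mul_sq (μ := μ) hΩ hne φ.2
    (hΔ φ) (tsupport_laplacian_subset _) m
  have hDi (φ : testFunctions Ω) := integrableOn_inv_infDist_compl_pow_mul_sq (μ := μ) hΩ hne φ.2
    (hD φ) (tsupport_fderiv_apply_subset ℝ e) k
  simp_rw [inv_pow] at hΔi hDi hapriori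
  obtain ⟨v, hvm, hvi, hvw, hvφ⟩ := exists_integral_mul_eq_of_weighted_integral_sq_le
    (A := testFunctions.laplacian Ω) (P := testFunctions.dirDeriv Ω e) (w := fun z => -w z)
    (hweight m) (hweightm m) (hweight k) (hweightm k)
    (fun φ => (hΔ φ).aestronglyMeasurable) hΔi (fun φ => (hD φ).aestronglyMeasurable) hDi
    hw.neg (by simpa only [neg_sq, mul_comm, IntegrableOn] using hwi) hC.le
    (fun φ => hapriori φ φ.2)
  simp only [neg_sq, mul_comm (infDist _ Ωᶜ ^ _)] at hvi hvw
  refine ⟨v, hvm, fun φ hφ hφc hφΩ => ?_, hvi, hvw⟩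
  rw [← integral_neg]
  simp_rw [← neg_mul]
  exact hvφ ⟨φ, hφ, hφc, hφΩ⟩

end WeakSolution

lemma lapR_eq_laplacian {n : ℕ} (f : En n → ℝ) : lapR f = Δ f := by
  rw [laplacian_eq_iteratedFDeriv_orthonormalBasis f (EuclideanSpace.basisFun (Fin n) ℝ)]
  ext x
  simp [lapR]

end

/-- let `Ω ⊂ ℝⁿ` be bounded open of diameter `< 1` and `k ∈ ℕ`.
For every `w ∈ L²_loc(Ω)` with `‖w‖_k² = ∫_Ω |w|² d(z,∂Ω)^{2k} dλ < ∞` there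
is `v` solving `Δv = ∂w/∂x_j` in `𝒟'(Ω)` (stated weakly: for every test `φ`
supported in `Ω`, `∫ v Δφ = -∫ w ∂_j φ`) with
`‖v‖²_{k+n-1} ≤ C(Ω,k,n) ‖w‖_k²`. -/
theorem laplace_weighted_solution
    (n k : ℕ) (hn : 3 ≤ n) (j : Fin n)
    (Ω : Set (En n)) (hΩo : IsOpen Ω) (hΩb : Bornology.IsBounded Ω)
    (hdiam : diam Ω < 1) :
    ∃ C : ℝ, 0 < C ∧
      ∀ w : En n → ℝ, AEStronglyMeasurable w (volume.restrict Ω) →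
        IntegrableOn (fun z => w z ^ 2 * (infDist z Ωᶜ) ^ (2 * k)) Ω →
        ∃ v : En n → ℝ,
          (∀ φ : En n → ℝ, IsTest φ → tsupport φ ⊆ Ω →
            (∫ z in Ω, v z * lapR φ z) =
              -∫ z in Ω, w z * fderiv ℝ φ z (EuclideanSpace.single j 1)) ∧
          IntegrableOn
            (fun z => v z ^ 2 * (infDist z Ωᶜ) ^ (2 * (k + n - 1))) Ω ∧
          (∫ z in Ω, v z ^ 2 * (infDist z Ωᶜ) ^ (2 * (k + n - 1))) ≤
            C * ∫ z in Ω, w z ^ 2 * (infDist z Ωᶜ) ^ (2 * k) := by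
  have : Nontrivial (En n) := Module.nontrivial_of_finrank_pos (R := ℝ) (by
    rw [finrank_euclideanSpace_fin]; omega)
  obtain ⟨C, hC, hsolve⟩ := laplace_weighted_solution_general volume hΩo hΩb (k := 2 * k)
    (m := 2 * (k + n - 1)) (by rw [finrank_euclideanSpace_fin]; omega) (EuclideanSpace.single j 1)
  refine ⟨C, hC, fun w hw hwi => ?_⟩
  obtain ⟨v, -, hv, hvw⟩ := hsolve w hw hwi
  refine ⟨v, fun φ hφ hφΩ => ?_, hvw⟩
  rw [lapR_eq_laplacian]
  exact hv φ (hφ.1.of_le (WithTop.coe_le_coe.2 le_top)) hφ.2 hφΩ
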